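/- arXiv:2601.21580 — 2 statements merged into one kernel-verified Lean document; each statement's English description precedes it below -/
import Mathlib

section
/- Let T be a finite tree with at least two vertices. If T is not a path, then its metric dimension satisfies μ(T) = σ(T) − ex(T), where σ(T) is the number of leaves of T and ex(T) is the number of exterior major vertices of T. If T is a path, then μ(T) = 1. -/
open SimpleGraph

variable {V : Type*}

/-- `S` is a doubly resolving set of `G`: every pair of distinct vertices is doubly
resolved by some pair of vertices of `S`. -/
def IsDoublyResolvingSet (G : SimpleGraph V) (S : Set V) : Prop :=
  ∀ u v : V, u ≠ v → ∃ x ∈ S, ∃ y ∈ S,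
    (G.dist u x : ℤ) - (G.dist u y : ℤ) ≠ (G.dist v x : ℤ) - (G.dist v y : ℤ)

/-- `Ψ(G)`: the minimum cardinality of a doubly resolving set of `G`. -/
noncomputable def psi (G : SimpleGraph V) : ℕ :=
  sInf {n | ∃ S : Set V, IsDoublyResolvingSet G S ∧ S.ncard = n}

/-- The degree of a vertex, as the cardinality of its neighbor set. -/
noncomputable def deg (G : SimpleGraph V) (v : V) : ℕ := (G.neighborSet v).ncard

/-- The maximum degree `Δ(G)`. -/
noncomputable def maxDeg (G : SimpleGraph V) : ℕ := sSup (Set.range (deg G))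
/-- `S` is a resolving set of `G`. -/
def IsResolvingSet (G : SimpleGraph V) (S : Set V) : Prop :=
  ∀ u v : V, u ≠ v → ∃ x ∈ S, G.dist u x ≠ G.dist v x

/-- `μ(G)`: the metric dimension of `G`, i.e., the minimum cardinality of a resolving set. -/
noncomputable def metricDim (G : SimpleGraph V) : ℕ :=
  sInf {n | ∃ S : Set V, IsResolvingSet G S ∧ S.ncard = n}

/-!
Removing an edge `va` of a tree leaves two components. Every path from the component of `a` (the
*branch* at `v` towards `a`) to the rest of the tree passes through `v`. Two distinct vertices at
even distance have a midpoint `m` and lie in different branches at `m`, and they are resolved by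
every vertex of either branch; at odd distance they are resolved by every vertex, by parity.
Conversely two neighbours of `m` are resolved only by the vertices of their two branches. So a
nonempty `S` is resolving if and only if it meets at least one of any two branches at a vertex.

Suppose the tree has a major vertex, and call a branch without major vertices a *leg*. A branch that
is not a leg contains two legs of a single major vertex, so it is enough that `S` misses at most one
leg at each major vertex. Distinct legs at major vertices are disjoint and each contains exactly one
leaf, which is a terminal vertex of its base. Hence a minimum resolving set consists of all leaves
but one terminal vertex for each exterior major vertex. Without major vertices the tree is itself a
leg, seen from any leaf, and the distance to that leaf resolves all vertices.
-/

section Distance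

variable {G : SimpleGraph V} {u v w : V}

lemma dist_add_dist_of_mem_support (hG : G.Connected) {p : G.Walk u v}
    (hp : p.length = G.dist u v) (hw : w ∈ p.support) :
    G.dist u w + G.dist w v = G.dist u v := by
  classical
  refine le_antisymm ?_ hG.dist_triangle
  calc G.dist u w + G.dist w v
      ≤ (p.takeUntil w hw).length + (p.dropUntil w hw).length := add_le_add (dist_le _) (dist_le _)
    _ = G.dist u v := by rw [← Walk.length_append, Walk.take_spec, hp]

lemma exists_dist_eq_and_dist_eq (hG : G.Connected) {k l : ℕ} (h : G.dist u v = k + l) :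
    ∃ m, G.dist u m = k ∧ G.dist m v = l := by
  obtain ⟨p, hp⟩ := hG.exists_walk_length_eq_dist u v
  have hk : G.dist u (p.getVert k) ≤ k := (dist_le (p.take k)).trans (by simp)
  have hl : G.dist (p.getVert k) v ≤ l :=
    (dist_le (p.drop k)).trans (by rw [Walk.drop_length]; omega)
  have := hG.dist_triangle (u := u) (v := p.getVert k) (w := v)
  exact ⟨p.getVert k, by omega, by omega⟩

lemma even_dist_add_dist_add_length (hG : G.IsTree) (x : V) (p : G.Walk u v) :
    Even (G.dist x u + G.dist x v + p.length) := by
  induction p with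
  | nil => simp
  | cons h p ih =>
    have := hG.dist_eq_dist_add_one_of_adj x h
    rw [Walk.length_cons]
    grind

end Distance

section Degree

variable {G : SimpleGraph V} {v a b c : V}

lemma deg_eq_one_iff_existsUnique_adj : deg G v = 1 ↔ ∃! a, G.Adj v a := by
  rw [deg, Set.ncard_eq_one]
  simp only [Set.eq_singleton_iff_unique_mem, mem_neighborSet, ExistsUnique]

variable [Finite V]

lemma three_le_deg_iff :
    3 ≤ deg G v ↔ ∃ a b c, G.Adj v a ∧ G.Adj v b ∧ G.Adj v c ∧ a ≠ b ∧ a ≠ c ∧ b ≠ c :=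
  Set.two_lt_ncard_iff

lemma exists_adj_adj_ne_of_three_le_deg (hv : 3 ≤ deg G v) (c : V) :
    ∃ a b, G.Adj v a ∧ G.Adj v b ∧ a ≠ b ∧ a ≠ c ∧ b ≠ c := by
  obtain ⟨x, y, z, hx, hy, hz, hxy, hxz, hyz⟩ := three_le_deg_iff.1 hv
  grind

lemma eq_of_adj_of_deg_lt_three (hv : deg G v < 3) (ha : G.Adj v a) (hb : G.Adj v b)
    (hc : G.Adj v c) (hac : a ≠ c) (hbc : b ≠ c) : a = b := by
  by_contra hab
  exact hv.not_ge (three_le_deg_iff.2 ⟨a, b, c, ha, hb, hc, hab, hac, hbc⟩)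

end Degree

/-- The branch of `G` at `v` towards a neighbour `a` of `v`. In a tree this is the component of `a`
after the edge `va` is removed. -/
def branch (G : SimpleGraph V) (v a : V) : Set V := {x | G.dist x a < G.dist x v}

section Branch

variable {G T : SimpleGraph V} {v w x a b : V}

lemma mem_branch : x ∈ branch G v a ↔ G.dist x a < G.dist x v := Iff.rfl

lemma ne_of_mem_branch (hx : x ∈ branch G v a) : x ≠ v := by
  rintro rfl
  simp [mem_branch] at hx

lemma neighbor_mem_branch (h : G.Adj v a) : a ∈ branch G v a := by
  simp [mem_branch, dist_eq_one_iff_adj.2 h.symm]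

lemma exists_adj_mem_branch (hG : G.Connected) (h : x ≠ v) :
    ∃ a, G.Adj v a ∧ x ∈ branch G v a := by
  have hpos := hG.pos_dist_of_ne h.symm
  obtain ⟨a, hva, hax⟩ := exists_dist_eq_and_dist_eq hG (u := v) (v := x) (k := 1)
    (l := G.dist v x - 1) (by omega)
  refine ⟨a, dist_eq_one_iff_adj.1 hva, ?_⟩
  rw [mem_branch, dist_comm, hax, G.dist_comm (u := x)]
  omega

lemma eq_of_mem_branch_of_deg_eq_one (hG : G.Connected) (h : G.Adj v a) (ha : deg G a = 1)
    (hx : x ∈ branch G v a) : x = a := by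
  by_contra hxa
  obtain ⟨b, hb, hxb⟩ := exists_adj_mem_branch hG hxa
  obtain rfl := (deg_eq_one_iff_existsUnique_adj.1 ha).unique hb h.symm
  exact lt_asymm (mem_branch.1 hx) (mem_branch.1 hxb)

lemma dist_eq_dist_add_one_of_mem_branch (hT : T.IsTree) (h : T.Adj v a)
    (hx : x ∈ branch T v a) : T.dist x v = T.dist x a + 1 := by
  have := hT.dist_eq_dist_add_one_of_adj x h
  rw [mem_branch] at hx
  omega

lemma dist_eq_dist_add_one_of_notMem_branch (hT : T.IsTree) (h : T.Adj v a)
    (hx : x ∉ branch T v a) : T.dist x a = T.dist x v + 1 := by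
  have := hT.dist_eq_dist_add_one_of_adj x h
  rw [mem_branch] at hx
  omega

-- Closing `p` up by geodesics `a → x` and `w → v` gives a walk that crosses the bridge `va`,
-- and neither geodesic does.
lemma mem_support_of_mem_branch_of_notMem_branch (hT : T.IsTree) (h : T.Adj v a)
    (hx : x ∈ branch T v a) (hw : w ∉ branch T v a) (p : T.Walk x w) : v ∈ p.support := by
  obtain ⟨q, hq⟩ := hT.connected.exists_walk_length_eq_dist a x
  obtain ⟨r, hr⟩ := hT.connected.exists_walk_length_eq_dist w v
  have hv : v ∉ q.support := fun hv ↦ by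
    have := dist_add_dist_of_mem_support hT.connected hq hv
    rw [mem_branch, dist_comm, T.dist_comm (u := x)] at hx
    omega
  have ha : a ∉ r.support := fun ha ↦ by
    have := dist_add_dist_of_mem_support hT.connected hr ha
    rw [mem_branch] at hw
    have := hT.connected.pos_dist_of_ne h.ne'
    omega
  have hbridge := isBridge_iff_forall_walk_mem_edges.1
    (isAcyclic_iff_forall_adj_isBridge.1 hT.isAcyclic h.symm) ((q.append p).append r)
  simp only [Walk.edges_append, List.mem_append] at hbridge
  rcases hbridge with (hq | hp) | hr
  · exact absurd (q.snd_mem_support_of_mem_edges hq) hv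
  · exact p.snd_mem_support_of_mem_edges hp
  · exact absurd (r.fst_mem_support_of_mem_edges hr) ha

lemma dist_eq_add_of_mem_branch_of_notMem_branch (hT : T.IsTree) (h : T.Adj v a)
    (hx : x ∈ branch T v a) (hw : w ∉ branch T v a) :
    T.dist x w = T.dist x v + T.dist v w := by
  obtain ⟨p, hp⟩ := hT.connected.exists_walk_length_eq_dist x w
  exact (dist_add_dist_of_mem_support hT.connected hp
    (mem_support_of_mem_branch_of_notMem_branch hT h hx hw p)).symm

lemma eq_of_mem_branch_of_mem_branch (hT : T.IsTree) (ha : T.Adj v a) (hb : T.Adj v b)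
    (hxa : x ∈ branch T v a) (hxb : x ∈ branch T v b) : a = b := by
  by_contra hab
  have hba : b ∉ branch T v a := fun hb' ↦ by
    rw [mem_branch, dist_eq_one_iff_adj.2 hb.symm] at hb'
    have := hT.connected.pos_dist_of_ne (Ne.symm hab)
    omega
  have := dist_eq_add_of_mem_branch_of_notMem_branch hT ha hxa hba
  rw [mem_branch] at hxb
  omega

lemma branch_subset_branch (hT : T.IsTree) (hb : T.Adj w b) (hw : w ∈ branch T v a)
    (hv : v ∉ branch T w b) : branch T w b ⊆ branch T v a := by
  intro x hx
  rw [mem_branch] at hw ⊢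
  calc T.dist x a ≤ T.dist x w + T.dist w a := hT.connected.dist_triangle
    _ < T.dist x w + T.dist w v := by omega
    _ = T.dist x v := (dist_eq_add_of_mem_branch_of_notMem_branch hT hb hx hv).symm

lemma branch_subset_branch_of_adj_of_adj (hT : T.IsTree) (ha : T.Adj v a) (hb : T.Adj a b)
    (hbv : b ≠ v) : branch T a b ⊆ branch T v a :=
  branch_subset_branch hT hb (neighbor_mem_branch ha) fun hv ↦
    hbv (eq_of_mem_branch_of_mem_branch hT hb ha.symm hv (neighbor_mem_branch ha.symm))

lemma exists_mem_branch_deg_eq_one [Finite V] (hT : T.IsTree) (h : T.Adj v a) :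
    ∃ u ∈ branch T v a, deg T u = 1 := by
  obtain ⟨u, hu, hmax⟩ := Set.exists_max_image (branch T v a) (T.dist · v) (Set.toFinite _)
    ⟨a, neighbor_mem_branch h⟩
  have hv_mem : ∀ c, T.Adj u c → v ∈ branch T u c := fun c hc ↦ by
    by_contra hv
    have hcu := neighbor_mem_branch hc
    have hcv := dist_eq_add_of_mem_branch_of_notMem_branch hT hc hcu hv
    rw [dist_eq_one_iff_adj.2 hc.symm] at hcv
    have : T.dist c v ≤ T.dist u v := hmax c (branch_subset_branch hT hc hu hv hcu)
    omega
  obtain ⟨p, hp, hvp⟩ := exists_adj_mem_branch hT.connected (ne_of_mem_branch hu).symm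
  exact ⟨u, hu, deg_eq_one_iff_existsUnique_adj.2
    ⟨p, hp, fun c hc ↦ eq_of_mem_branch_of_mem_branch hT hc hp (hv_mem c hc) hvp⟩⟩

lemma exists_deg_eq_one [Finite V] [Nontrivial V] (hT : T.IsTree) : ∃ u, deg T u = 1 := by
  obtain ⟨x, y, hxy⟩ := exists_pair_ne V
  obtain ⟨a, ha, -⟩ := exists_adj_mem_branch hT.connected hxy
  obtain ⟨u, -, hu⟩ := exists_mem_branch_deg_eq_one hT ha
  exact ⟨u, hu⟩

end Branch

section Resolving

variable {T : SimpleGraph V} {S : Set V} {u v x a b m : V}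

lemma IsResolvingSet.exists_mem_branch_union (hT : T.IsTree) (hS : IsResolvingSet T S)
    (ha : T.Adj m a) (hb : T.Adj m b) (hab : a ≠ b) :
    ∃ x ∈ S, x ∈ branch T m a ∪ branch T m b := by
  obtain ⟨x, hxS, hx⟩ := hS a b hab
  refine ⟨x, hxS, ?_⟩
  by_contra hxab
  rw [Set.mem_union, not_or] at hxab
  rw [T.dist_comm (u := a), T.dist_comm (u := b),
    dist_eq_dist_add_one_of_notMem_branch hT ha hxab.1,
    dist_eq_dist_add_one_of_notMem_branch hT hb hxab.2] at hx
  exact hx rfl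

lemma dist_lt_dist_of_mem_branch (hT : T.IsTree) (ha : T.Adj m a) (hx : x ∈ branch T m a)
    (hu : u ∈ branch T m a) (hv : v ∉ branch T m a) (huv : T.dist u m = T.dist v m) :
    T.dist u x < T.dist v x := by
  have hxv := dist_eq_add_of_mem_branch_of_notMem_branch hT ha hx hv
  rw [mem_branch] at hx hu
  calc T.dist u x ≤ T.dist u a + T.dist a x := hT.connected.dist_triangle
    _ < T.dist v m + T.dist m x := by rw [T.dist_comm (u := a), T.dist_comm (u := m)]; omega
    _ = T.dist v x := by rw [T.dist_comm (u := v) (v := x), hxv, dist_comm, add_comm, dist_comm]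

lemma exists_midpoint_branches (hT : T.IsTree) (huv : u ≠ v) (heven : Even (T.dist u v)) :
    ∃ m a b, T.Adj m a ∧ T.Adj m b ∧ a ≠ b ∧ u ∈ branch T m a ∧ v ∈ branch T m b ∧
      T.dist u m = T.dist v m := by
  obtain ⟨k, hk⟩ := heven
  have hpos := hT.connected.pos_dist_of_ne huv
  obtain ⟨m, hum, hmv⟩ := exists_dist_eq_and_dist_eq hT.connected hk
  have hne_u : u ≠ m := by rintro rfl; rw [dist_self] at hum; omega
  have hne_v : v ≠ m := by rintro rfl; rw [dist_self] at hmv; omega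
  obtain ⟨a, ha, hua⟩ := exists_adj_mem_branch hT.connected hne_u
  obtain ⟨b, hb, hvb⟩ := exists_adj_mem_branch hT.connected hne_v
  rw [dist_comm] at hmv
  refine ⟨m, a, b, ha, hb, ?_, hua, hvb, hum.trans hmv.symm⟩
  rintro rfl
  have := hT.connected.dist_triangle (u := u) (v := a) (w := v)
  rw [mem_branch] at hua hvb
  rw [T.dist_comm (u := a)] at this
  omega

lemma isResolvingSet_of_forall_adj (hT : T.IsTree) (hS : S.Nonempty)
    (hbranch : ∀ m a b, T.Adj m a → T.Adj m b → a ≠ b →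
      ∃ x ∈ S, x ∈ branch T m a ∪ branch T m b) :
    IsResolvingSet T S := by
  intro u v huv
  rcases Nat.even_or_odd (T.dist u v) with heven | hodd
  · obtain ⟨m, a, b, ha, hb, hab, hua, hvb, hm⟩ := exists_midpoint_branches hT huv heven
    have hub : u ∉ branch T m b := fun h ↦ hab (eq_of_mem_branch_of_mem_branch hT ha hb hua h)
    have hva : v ∉ branch T m a := fun h ↦ hab (eq_of_mem_branch_of_mem_branch hT ha hb h hvb)
    obtain ⟨x, hxS, hxa | hxb⟩ := hbranch m a b ha hb hab
    · exact ⟨x, hxS, (dist_lt_dist_of_mem_branch hT ha hxa hua hva hm).ne⟩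
    · exact ⟨x, hxS, (dist_lt_dist_of_mem_branch hT hb hxb hvb hub hm.symm).ne'⟩
  · obtain ⟨x, hxS⟩ := hS
    obtain ⟨p, hp⟩ := hT.connected.exists_walk_length_eq_dist u v
    have hparity := even_dist_add_dist_add_length hT x p
    refine ⟨x, hxS, fun hx ↦ ?_⟩
    rw [hp, T.dist_comm (u := x), T.dist_comm (u := x), hx] at hparity
    grind

end Resolving

/-- The branch of `G` at `v` towards the neighbour `a` is a leg: it contains no major vertex. The
base `v` may have any degree. -/
structure IsLeg (G : SimpleGraph V) (v a : V) : Prop where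
  adj : G.Adj v a
  deg_lt_three : ∀ x ∈ branch G v a, deg G x < 3

section Leg

variable {T : SimpleGraph V} {u u' v v' x y a a' b : V}

lemma IsLeg.tail (hT : T.IsTree) (h : IsLeg T v a) (hb : T.Adj a b) (hbv : b ≠ v) :
    IsLeg T a b :=
  ⟨hb, fun x hx ↦ h.deg_lt_three x (branch_subset_branch_of_adj_of_adj hT h.adj hb hbv hx)⟩

lemma IsLeg.base_eq (hT : T.IsTree) (h : IsLeg T v a) (h' : IsLeg T v' a') (hv : 3 ≤ deg T v)
    (hv' : 3 ≤ deg T v') (hx : x ∈ branch T v a) (hx' : x ∈ branch T v' a') : v = v' := by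
  have hdist := dist_eq_add_of_mem_branch_of_notMem_branch hT h.adj hx
    fun hmem ↦ (h.deg_lt_three v' hmem).not_ge hv'
  have hdist' := dist_eq_add_of_mem_branch_of_notMem_branch hT h'.adj hx'
    fun hmem ↦ (h'.deg_lt_three v hmem).not_ge hv
  exact hT.connected.dist_eq_zero_iff.1 (by omega)

variable [Finite V]

lemma exists_adj_mem_branch_of_deg_lt_three (hT : T.IsTree) (hva : T.Adj v a)
    (ha : deg T a < 3) (hx : x ∈ branch T v a) (hxa : x ≠ a) (hy : y ∈ branch T v a)
    (hya : y ≠ a) : ∃ b, T.Adj a b ∧ b ≠ v ∧ x ∈ branch T a b ∧ y ∈ branch T a b := by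
  have ne_base : ∀ z ∈ branch T v a, ∀ c, z ∈ branch T a c → c ≠ v := by
    rintro z hz c hzc rfl
    exact lt_asymm (mem_branch.1 hz) (mem_branch.1 hzc)
  obtain ⟨b, hb, hxb⟩ := exists_adj_mem_branch hT.connected hxa
  obtain ⟨c, hc, hyc⟩ := exists_adj_mem_branch hT.connected hya
  have hbv := ne_base x hx b hxb
  obtain rfl := eq_of_adj_of_deg_lt_three ha hb hc hva.symm hbv (ne_base y hy c hyc)
  exact ⟨b, hb, hbv, hxb, hyc⟩

lemma IsLeg.injOn_dist (hT : T.IsTree) (h : IsLeg T v a) :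
    (branch T v a).InjOn (T.dist · v) := by
  intro x hx y hy (hxy : T.dist x v = T.dist y v)
  induction hn : T.dist x v generalizing v a with
  | zero => exact absurd (hT.connected.dist_eq_zero_iff.1 hn) (ne_of_mem_branch hx)
  | succ n ih =>
    have hxa := dist_eq_dist_add_one_of_mem_branch hT h.adj hx
    have hya := dist_eq_dist_add_one_of_mem_branch hT h.adj hy
    have hdist : T.dist x a = T.dist y a := by omega
    have heq_iff : x = a ↔ y = a := by
      rw [← hT.connected.dist_eq_zero_iff, hdist, hT.connected.dist_eq_zero_iff]
    by_cases hx_eq : x = a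
    · rw [hx_eq, heq_iff.1 hx_eq]
    obtain ⟨b, hb, hbv, hxb, hyb⟩ := exists_adj_mem_branch_of_deg_lt_three hT h.adj
      (h.deg_lt_three a (neighbor_mem_branch h.adj)) hx hx_eq hy (mt heq_iff.2 hx_eq)
    exact ih (h.tail hT hb hbv) hxb hyb hdist (by omega)

lemma IsLeg.leaf_unique (hT : T.IsTree) (h : IsLeg T v a) (hu : deg T u = 1)
    (hu' : deg T u' = 1) (hmem : u ∈ branch T v a) (hmem' : u' ∈ branch T v a) : u = u' := by
  induction hn : T.dist u v generalizing v a with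
  | zero => exact absurd (hT.connected.dist_eq_zero_iff.1 hn) (ne_of_mem_branch hmem)
  | succ n ih =>
    by_cases hua : u = a
    · subst hua
      exact (eq_of_mem_branch_of_deg_eq_one hT.connected h.adj hu hmem').symm
    by_cases hua' : u' = a
    · subst hua'
      exact eq_of_mem_branch_of_deg_eq_one hT.connected h.adj hu' hmem
    obtain ⟨b, hb, hbv, hub, hub'⟩ := exists_adj_mem_branch_of_deg_lt_three hT h.adj
      (h.deg_lt_three a (neighbor_mem_branch h.adj)) hmem hua hmem' hua'
    have := dist_eq_dist_add_one_of_mem_branch hT h.adj hmem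
    exact ih (h.tail hT hb hbv) hub hub' (by omega)

lemma isLeg_of_forall_dist_le (hT : T.IsTree) (hu : deg T u = 1)
    (hmin : ∀ w, 3 ≤ deg T w → T.dist u v ≤ T.dist u w) (h : T.Adj v a)
    (hua : u ∈ branch T v a) : IsLeg T v a := by
  refine ⟨h, fun x hx ↦ ?_⟩
  induction hn : T.dist u v generalizing v a with
  | zero => exact absurd (hT.connected.dist_eq_zero_iff.1 hn) (ne_of_mem_branch hua)
  | succ n ih =>
    have hdist := dist_eq_dist_add_one_of_mem_branch hT h hua
    have ha : deg T a < 3 := by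
      by_contra! ha
      have := hmin a ha
      omega
    by_cases hxa : x = a
    · rwa [hxa]
    have hu_ne : u ≠ a := by
      rintro rfl
      exact hxa (eq_of_mem_branch_of_deg_eq_one hT.connected h hu hx)
    obtain ⟨b, hb, -, hub, hxb⟩ :=
      exists_adj_mem_branch_of_deg_lt_three hT h ha hua hu_ne hx hxa
    exact ih (fun w hw ↦ by have := hmin w hw; omega) hb hub hxb (by omega)

lemma exists_isLeg_of_deg_eq_one (hT : T.IsTree) (hmajor : ∃ w, 3 ≤ deg T w)
    (hu : deg T u = 1) : ∃ v a, 3 ≤ deg T v ∧ IsLeg T v a ∧ u ∈ branch T v a := by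
  obtain ⟨v, hv, hmin⟩ := Set.exists_min_image {w | 3 ≤ deg T w} (T.dist u ·) (Set.toFinite _)
    hmajor
  rw [Set.mem_ofPred_eq] at hv
  have huv : u ≠ v := by rintro rfl; omega
  obtain ⟨a, ha, hua⟩ := exists_adj_mem_branch hT.connected huv
  exact ⟨v, a, hv, isLeg_of_forall_dist_le hT hu hmin ha hua, hua⟩

lemma exists_isLeg_isLeg_branch_subset (hT : T.IsTree)
    (hmajor : ∃ w ∈ branch T v a, 3 ≤ deg T w) :
    ∃ w b c, 3 ≤ deg T w ∧ b ≠ c ∧ IsLeg T w b ∧ IsLeg T w c ∧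
      branch T w b ∪ branch T w c ⊆ branch T v a := by
  obtain ⟨w, ⟨hwa, hw⟩, hmax⟩ := Set.exists_max_image {w | w ∈ branch T v a ∧ 3 ≤ deg T w}
    (T.dist · v) (Set.toFinite _) hmajor
  have hsubset : ∀ b, T.Adj w b → v ∉ branch T w b → branch T w b ⊆ branch T v a :=
    fun b hb hvb ↦ branch_subset_branch hT hb hwa hvb
  have hleg : ∀ b, T.Adj w b → v ∉ branch T w b → IsLeg T w b := by
    refine fun b hb hvb ↦ ⟨hb, fun x hx ↦ ?_⟩
    by_contra! hx_major
    have hle : T.dist x v ≤ T.dist w v := hmax x ⟨hsubset b hb hvb hx, hx_major⟩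
    have hadd := dist_eq_add_of_mem_branch_of_notMem_branch hT hb hx hvb
    have hpos := hT.connected.pos_dist_of_ne (ne_of_mem_branch hx)
    omega
  obtain ⟨p, hp, hvp⟩ := exists_adj_mem_branch hT.connected (ne_of_mem_branch hwa).symm
  obtain ⟨b, c, hb, hc, hbc, hbp, hcp⟩ := exists_adj_adj_ne_of_three_le_deg hw p
  have hvb : v ∉ branch T w b := fun h ↦ hbp (eq_of_mem_branch_of_mem_branch hT hb hp h hvp)
  have hvc : v ∉ branch T w c := fun h ↦ hcp (eq_of_mem_branch_of_mem_branch hT hc hp h hvp)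
  exact ⟨w, b, c, hw, hbc, hleg b hb hvb, hleg c hc hvc,
    Set.union_subset (hsubset b hb hvb) (hsubset c hc hvc)⟩

lemma IsLeg.three_le_deg_base (hT : T.IsTree) (hmajor : ∃ w, 3 ≤ deg T w)
    (ha : IsLeg T v a) (hb : IsLeg T v b) (hab : a ≠ b) : 3 ≤ deg T v := by
  obtain ⟨w, hw⟩ := hmajor
  by_cases hwv : w = v
  · rwa [← hwv]
  obtain ⟨c, hc, hwc⟩ := exists_adj_mem_branch hT.connected hwv
  refine three_le_deg_iff.2 ⟨a, b, c, ha.adj, hb.adj, hc, hab, ?_, ?_⟩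
  · rintro rfl
    exact (ha.deg_lt_three w hwc).not_ge hw
  · rintro rfl
    exact (hb.deg_lt_three w hwc).not_ge hw

theorem isResolvingSet_iff_forall_isLeg (hT : T.IsTree) (hmajor : ∃ w, 3 ≤ deg T w)
    {S : Set V} : IsResolvingSet T S ↔ ∀ v a b, 3 ≤ deg T v → IsLeg T v a → IsLeg T v b → a ≠ b →
      ∃ x ∈ S, x ∈ branch T v a ∪ branch T v b := by
  refine ⟨fun hS v a b _ ha hb hab ↦ hS.exists_mem_branch_union hT ha.adj hb.adj hab, fun hS ↦ ?_⟩
  have hmeets_major : ∀ v a, (∃ w ∈ branch T v a, 3 ≤ deg T w) → ∃ x ∈ S, x ∈ branch T v a := by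
    intro v a hva
    obtain ⟨w, b, c, hw, hbc, hb, hc, hsubset⟩ := exists_isLeg_isLeg_branch_subset hT hva
    obtain ⟨x, hxS, hx⟩ := hS w b c hw hb hc hbc
    exact ⟨x, hxS, hsubset hx⟩
  have hmeets : ∀ v a b, T.Adj v a → T.Adj v b → a ≠ b →
      ∃ x ∈ S, x ∈ branch T v a ∪ branch T v b := by
    intro v a b ha hb hab
    by_cases hleg_a : IsLeg T v a
    · by_cases hleg_b : IsLeg T v b
      · exact hS v a b (hleg_a.three_le_deg_base hT hmajor hleg_b hab) hleg_a hleg_b hab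
      · obtain ⟨x, hxS, hx⟩ := hmeets_major v b
          (by by_contra! hlt; exact hleg_b ⟨hb, hlt⟩)
        exact ⟨x, hxS, Or.inr hx⟩
    · obtain ⟨x, hxS, hx⟩ := hmeets_major v a
        (by by_contra! hlt; exact hleg_a ⟨ha, hlt⟩)
      exact ⟨x, hxS, Or.inl hx⟩
  obtain ⟨w, hw⟩ := hmajor
  obtain ⟨a, b, ha, hb, hab, -⟩ := exists_adj_adj_ne_of_three_le_deg hw w
  obtain ⟨x, hxS, -⟩ := hmeets w a b ha hb hab
  exact isResolvingSet_of_forall_adj hT ⟨x, hxS⟩ hmeets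

end Leg

/-- The set of leaves of `G`. -/
def leaves (G : SimpleGraph V) : Set V := {v | deg G v = 1}

/-- The leaf `u` is a terminal vertex of `v`: it is strictly closer to `v` than to any other major
vertex. That `v` is itself major is not part of the definition. -/
def IsTerminal (G : SimpleGraph V) (u v : V) : Prop :=
  deg G u = 1 ∧ ∀ w, 3 ≤ deg G w → w ≠ v → G.dist u v < G.dist u w

/-- The set of exterior major vertices of `G`, that is, major vertices with a terminal vertex. -/
def exteriorMajors (G : SimpleGraph V) : Set V := {v | 3 ≤ deg G v ∧ ∃ u, IsTerminal G u v}

section Counting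

variable {G T : SimpleGraph V} {S : Set V} {u v v' a : V}

lemma IsTerminal.major_unique (h : IsTerminal G u v) (h' : IsTerminal G u v') (hv : 3 ≤ deg G v)
    (hv' : 3 ≤ deg G v') : v = v' := by
  by_contra hne
  exact lt_asymm (h.2 v' hv' (Ne.symm hne)) (h'.2 v hv hne)

lemma IsLeg.isTerminal (hT : T.IsTree) (h : IsLeg T v a) (hu : deg T u = 1)
    (hua : u ∈ branch T v a) : IsTerminal T u v := by
  refine ⟨hu, fun w hw hwv ↦ ?_⟩
  rw [dist_eq_add_of_mem_branch_of_notMem_branch hT h.adj hua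
    fun hmem ↦ (h.deg_lt_three w hmem).not_ge hw]
  exact Nat.lt_add_of_pos_right (hT.connected.pos_dist_of_ne hwv.symm)

variable [Finite V]

lemma ncard_le_of_forall_leg_meets (hT : T.IsTree) {L : Set V} (hL : L ⊆ leaves T)
    (hmeets : ∀ u ∈ L, ∃ s ∈ S, ∃ v a, 3 ≤ deg T v ∧ IsLeg T v a ∧ u ∈ branch T v a ∧
      s ∈ branch T v a) :
    L.ncard ≤ S.ncard := by
  choose! s hsS v a hv hleg hu hs using hmeets
  refine Set.ncard_le_ncard_of_injOn s hsS fun u huL u' huL' heq ↦ ?_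
  have hs' := hs u' huL'
  rw [← heq] at hs'
  have hv_eq := (hleg u huL).base_eq hT (hleg u' huL') (hv u huL) (hv u' huL') (hs u huL) hs'
  have hleg' := hleg u' huL'
  have hu' := hu u' huL'
  rw [← hv_eq] at hleg' hu' hs'
  have ha_eq := eq_of_mem_branch_of_mem_branch hT (hleg u huL).adj hleg'.adj (hs u huL) hs'
  rw [← ha_eq] at hu'
  exact (hleg u huL).leaf_unique hT (hL huL) (hL huL') (hu u huL) hu'

lemma ncard_le_of_forall_leg_disjoint (hT : T.IsTree) (hmajor : ∃ w, 3 ≤ deg T w)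
    (hS : IsResolvingSet T S) {L : Set V} (hL : L ⊆ leaves T)
    (hdisj : ∀ u ∈ L, ∀ v a, 3 ≤ deg T v → IsLeg T v a → u ∈ branch T v a →
      Disjoint S (branch T v a)) :
    L.ncard ≤ (exteriorMajors T).ncard := by
  have hexists : ∀ u ∈ L, ∃ v a, 3 ≤ deg T v ∧ IsLeg T v a ∧ u ∈ branch T v a :=
    fun u hu ↦ exists_isLeg_of_deg_eq_one hT hmajor (hL hu)
  choose! v a hv hleg hu using hexists
  refine Set.ncard_le_ncard_of_injOn v
    (fun u huL ↦ ⟨hv u huL, u, (hleg u huL).isTerminal hT (hL huL) (hu u huL)⟩)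
    fun u huL u' huL' heq ↦ ?_
  have hleg' := hleg u' huL'
  have hu' := hu u' huL'
  rw [← heq] at hleg' hu'
  have ha_eq : a u = a u' := by
    by_contra hne
    obtain ⟨x, hxS, hx | hx⟩ :=
      hS.exists_mem_branch_union hT (hleg u huL).adj hleg'.adj hne
    · exact (hdisj u huL _ _ (hv u huL) (hleg u huL) (hu u huL)).notMem_of_mem_left hxS hx
    · exact (hdisj u' huL' _ _ (hv u huL) hleg' hu').notMem_of_mem_left hxS hx
  rw [← ha_eq] at hu'
  exact (hleg u huL).leaf_unique hT (hL huL) (hL huL') (hu u huL) hu'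

lemma IsResolvingSet.ncard_leaves_le (hT : T.IsTree) (hmajor : ∃ w, 3 ≤ deg T w)
    (hS : IsResolvingSet T S) :
    (leaves T).ncard ≤ S.ncard + (exteriorMajors T).ncard := by
  let L : Set V := {u | ∃ s ∈ S, ∃ v a, 3 ≤ deg T v ∧ IsLeg T v a ∧ u ∈ branch T v a ∧
    s ∈ branch T v a}
  calc (leaves T).ncard = (leaves T ∩ L).ncard + (leaves T \ L).ncard :=
        (Set.ncard_inter_add_ncard_sdiff_eq_ncard _ _).symm
    _ ≤ S.ncard + (exteriorMajors T).ncard := by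
      refine add_le_add (ncard_le_of_forall_leg_meets hT Set.inter_subset_left fun u hu ↦ hu.2)
        (ncard_le_of_forall_leg_disjoint hT hmajor hS Set.sdiff_subset ?_)
      exact fun u hu v a hv hleg hua ↦ Set.disjoint_left.2 fun s hsS hs ↦
        hu.2 ⟨s, hsS, v, a, hv, hleg, hua, hs⟩

lemma isResolvingSet_leaves_diff_image (hT : T.IsTree) (hmajor : ∃ w, 3 ≤ deg T w) {c : V → V}
    (hc : ∀ v ∈ exteriorMajors T, IsTerminal T (c v) v) :
    IsResolvingSet T (leaves T \ c '' exteriorMajors T) := by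
  refine (isResolvingSet_iff_forall_isLeg hT hmajor).2 fun v a b hv ha hb hab ↦ ?_
  have eq_choice : ∀ u, IsTerminal T u v → u ∈ c '' exteriorMajors T → u = c v := by
    rintro _ hu ⟨w, hw, rfl⟩
    rw [(hc w hw).major_unique hu hw.1 hv]
  obtain ⟨u, hua, hu⟩ := exists_mem_branch_deg_eq_one hT ha.adj
  obtain ⟨u', hub, hu'⟩ := exists_mem_branch_deg_eq_one hT hb.adj
  by_cases huc : u ∈ c '' exteriorMajors T
  · refine ⟨u', ⟨hu', fun huc' ↦ hab ?_⟩, Or.inr hub⟩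
    have huu' : u = u' := (eq_choice u (ha.isTerminal hT hu hua) huc).trans
      (eq_choice u' (hb.isTerminal hT hu' hub) huc').symm
    exact eq_of_mem_branch_of_mem_branch hT ha.adj hb.adj hua (huu' ▸ hub)
  · exact ⟨u, ⟨hu, huc⟩, Or.inl hua⟩

lemma exists_isResolvingSet_ncard_eq (hT : T.IsTree) (hmajor : ∃ w, 3 ≤ deg T w) :
    ∃ S, IsResolvingSet T S ∧ S.ncard = (leaves T).ncard - (exteriorMajors T).ncard := by
  have hexists : ∀ v ∈ exteriorMajors T, ∃ u, IsTerminal T u v := fun v hv ↦ hv.2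
  choose! c hc using hexists
  have hinj : (exteriorMajors T).InjOn c := fun v hv w hw hvw ↦
    (hc v hv).major_unique (hvw ▸ hc w hw) hv.1 hw.1
  have hsubset : c '' exteriorMajors T ⊆ leaves T := Set.image_subset_iff.2 fun v hv ↦ (hc v hv).1
  exact ⟨_, isResolvingSet_leaves_diff_image hT hmajor hc,
    by rw [Set.ncard_sdiff hsubset, hinj.ncard_image]⟩

end Counting

section Path

variable {G T : SimpleGraph V} {r : V}

lemma adj_of_dist_add_one_eq (hG : G.Connected) (hinj : Function.Injective (G.dist · r)) {x y : V}
    (h : G.dist x r + 1 = G.dist y r) : G.Adj x y := by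
  obtain ⟨z, hyz, hzr⟩ := exists_dist_eq_and_dist_eq hG (h.symm.trans (add_comm _ 1))
  obtain rfl := hinj hzr
  exact (dist_eq_one_iff_adj.1 hyz).symm

variable [Finite V]

lemma nonempty_iso_pathGraph (hG : G.Connected) (hinj : Function.Injective (G.dist · r)) :
    Nonempty (G ≃g pathGraph (Nat.card V)) := by
  have := Fintype.ofFinite V
  have hlt : ∀ v, G.dist v r < Nat.card V := fun v ↦ by
    obtain ⟨p, hp, hlen⟩ := hG.exists_path_of_dist v r
    rw [← hlen, Nat.card_eq_fintype_card]
    exact hp.length_lt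
  let f : V → Fin (Nat.card V) := fun v ↦ ⟨G.dist v r, hlt v⟩
  have hf : Function.Bijective f :=
    Function.Injective.bijective_of_nat_card_le (fun x y hxy ↦ hinj (Fin.mk.inj_iff.1 hxy))
      (by simp)
  refine ⟨⟨Equiv.ofBijective f hf, fun {x y} ↦ ?_⟩⟩
  rw [pathGraph_adj]
  refine ⟨fun h ↦ h.elim (adj_of_dist_add_one_eq hG hinj)
    fun h' ↦ (adj_of_dist_add_one_eq hG hinj h').symm, fun h ↦ ?_⟩
  have hne : G.dist x r ≠ G.dist y r := hinj.ne h.ne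
  have := h.diff_dist_adj (u := r)
  rw [G.dist_comm (u := r), G.dist_comm (u := r)] at this
  simp only [Equiv.ofBijective_apply, f]
  omega

lemma dist_injective_of_forall_deg_lt_three (hT : T.IsTree) (hdeg : ∀ v, deg T v < 3)
    (hr : deg T r = 1) : Function.Injective (T.dist · r) := by
  intro x y (hxy : T.dist x r = T.dist y r)
  have heq_iff : x = r ↔ y = r := by
    rw [← hT.connected.dist_eq_zero_iff, hxy, hT.connected.dist_eq_zero_iff]
  by_cases hx : x = r
  · rw [hx, heq_iff.1 hx]
  obtain ⟨a, ha, hxa⟩ := exists_adj_mem_branch hT.connected hx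
  obtain ⟨b, hb, hyb⟩ := exists_adj_mem_branch hT.connected (mt heq_iff.2 hx)
  obtain rfl := (deg_eq_one_iff_existsUnique_adj.1 hr).unique ha hb
  exact IsLeg.injOn_dist hT ⟨ha, fun v _ ↦ hdeg v⟩ hxa hyb hxy

lemma deg_lt_three_of_iso_pathGraph {n : ℕ} (f : G ≃g pathGraph n) (v : V) : deg G v < 3 := by
  by_contra! hv
  obtain ⟨a, b, c, ha, hb, hc, hab, hac, hbc⟩ := three_le_deg_iff.1 hv
  have hadj : ∀ x, G.Adj v x → (f v).val + 1 = (f x).val ∨ (f x).val + 1 = (f v).val :=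
    fun x hx ↦ pathGraph_adj.1 (f.map_adj_iff.2 hx)
  have hne : ∀ x y, x ≠ y → (f x).val ≠ (f y).val :=
    fun x y hxy h ↦ hxy (f.injective (Fin.ext h))
  have := hadj a ha
  have := hadj b hb
  have := hadj c hc
  have := hne a b hab
  have := hne a c hac
  have := hne b c hbc
  omega

end Path

section MetricDim

variable {G T : SimpleGraph V} {S : Set V}

lemma IsResolvingSet.metricDim_eq (hS : IsResolvingSet G S)
    (hmin : ∀ S', IsResolvingSet G S' → S.ncard ≤ S'.ncard) : metricDim G = S.ncard :=
  IsLeast.csInf_eq ⟨⟨S, hS, rfl⟩, by rintro _ ⟨S', hS', rfl⟩; exact hmin S' hS'⟩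

lemma IsResolvingSet.nonempty [Nontrivial V] (hS : IsResolvingSet G S) : S.Nonempty := by
  obtain ⟨x, y, hxy⟩ := exists_pair_ne V
  obtain ⟨z, hz, -⟩ := hS x y hxy
  exact ⟨z, hz⟩

variable [Finite V]

theorem metricDim_eq_one_of_forall_deg_lt_three [Nontrivial V] (hT : T.IsTree)
    (hdeg : ∀ v, deg T v < 3) : metricDim T = 1 := by
  obtain ⟨r, hr⟩ := exists_deg_eq_one hT
  have hinj := dist_injective_of_forall_deg_lt_three hT hdeg hr
  have hS : IsResolvingSet T {r} := fun u v huv ↦ ⟨r, rfl, hinj.ne huv⟩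
  rw [hS.metricDim_eq, Set.ncard_singleton]
  intro S' hS'
  rw [Set.ncard_singleton]
  exact hS'.nonempty.ncard_pos

theorem metricDim_eq_ncard_leaves_sub_ncard_exteriorMajors (hT : T.IsTree)
    (hmajor : ∃ w, 3 ≤ deg T w) :
    metricDim T = (leaves T).ncard - (exteriorMajors T).ncard := by
  obtain ⟨S, hS, hcard⟩ := exists_isResolvingSet_ncard_eq hT hmajor
  rw [← hcard]
  refine hS.metricDim_eq fun S' hS' ↦ ?_
  rw [hcard]
  exact Nat.sub_le_iff_le_add.2 (hS'.ncard_leaves_le hT hmajor)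

theorem nonempty_iso_pathGraph_iff_forall_deg_lt_three [Nontrivial V] (hT : T.IsTree) :
    (∃ n : ℕ, Nonempty (T ≃g pathGraph n)) ↔ ∀ v, deg T v < 3 := by
  refine ⟨fun ⟨n, ⟨f⟩⟩ ↦ deg_lt_three_of_iso_pathGraph f, fun hdeg ↦ ?_⟩
  obtain ⟨r, hr⟩ := exists_deg_eq_one hT
  exact ⟨_, nonempty_iso_pathGraph hT.connected (dist_injective_of_forall_deg_lt_three hT hdeg hr)⟩

end MetricDim

/-- Let `T` be a finite tree with at least two vertices. If `T` is not a path,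
then `μ(T) = σ(T) - ex(T)`, where `σ(T)` is the number of leaves of `T` and `ex(T)` is the
number of exterior major vertices of `T` (major vertices having at least one terminal
vertex, i.e., a leaf strictly closer to it than to every other major vertex).
If `T` is a path, then `μ(T) = 1`. -/
theorem metricDim_tree {V : Type*} [Fintype V] (T : SimpleGraph V)
    (hT : T.IsTree) (hcard : 2 ≤ Fintype.card V) :
    (¬ (∃ n : ℕ, Nonempty (T ≃g pathGraph n)) →
      metricDim T =
        {v : V | deg T v = 1}.ncard -
          {v : V | 3 ≤ deg T v ∧ ∃ u : V, deg T u = 1 ∧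
            ∀ w : V, 3 ≤ deg T w → w ≠ v → T.dist u v < T.dist u w}.ncard) ∧
    ((∃ n : ℕ, Nonempty (T ≃g pathGraph n)) → metricDim T = 1) := by
  have : Nontrivial V := Fintype.one_lt_card_iff_nontrivial.1 hcard
  rw [nonempty_iso_pathGraph_iff_forall_deg_lt_three hT]
  refine ⟨fun hpath ↦ ?_, metricDim_eq_one_of_forall_deg_lt_three hT⟩
  push Not at hpath
  exact metricDim_eq_ncard_leaves_sub_ncard_exteriorMajors hT hpath
end

section
/- Let G be a finite connected simple graph with at least five vertices. Then the metric dimension of the line graph L(G) satisfies ⌈log₂ Δ(G)⌉ ≤ μ(L(G)) ≤ |V(G)| − 2, where Δ(G) is the maximum degree of G. -/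
open SimpleGraph

variable {V : Type*}

/-!
Lower bound: the edges at a vertex form a clique of the line graph, and the distances from two
adjacent vertices to a landmark differ by at most one, so a clique is already separated by the
parities of its distances to a resolving set `S`; hence it has at most `2 ^ |S|` vertices.

Upper bound: choose a vertex `x` with `G - x` connected, any other vertex `c`, and a spanning tree
`H` of `G - x` containing all edges of `G - x` at `c`. The `|V| - 2` edges of `H` resolve the line
graph. Indeed, let `e ≠ f` be edges outside `H` that meet the same edges of `H`. Then `H` has no
edge leaving the symmetric difference of `e` and `f`, which therefore contains every vertex but
`x`. With at least five vertices this leaves no room for `x` itself in `e ∪ f`, so the one of `e`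
and `f` that contains `c` is an edge of `G - x` at `c`, and so lies in `H`.
-/

section ResolvingSet

variable {G : SimpleGraph V} {S : Set V}

theorem IsResolvingSet.metricDim_le (hS : IsResolvingSet G S) : metricDim G ≤ S.ncard :=
  Nat.sInf_le ⟨S, hS, rfl⟩

theorem isResolvingSet_of_adj_iff_imp_eq (hG : G.Preconnected)
    (h : ∀ u ∉ S, ∀ v ∉ S, (∀ s ∈ S, G.Adj u s ↔ G.Adj v s) → u = v) : IsResolvingSet G S := by
  intro u v huv
  by_contra! hdist
  have hu : u ∉ S := fun hu => huv <| Eq.symm <| (hG v u).dist_eq_zero_iff.1 <| by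
    rw [← hdist u hu, dist_self]
  have hv : v ∉ S := fun hv => huv <| (hG u v).dist_eq_zero_iff.1 <| by
    rw [hdist v hv, dist_self]
  refine huv (h u hu v hv fun s hs => ?_)
  rw [← dist_eq_one_iff_adj, ← dist_eq_one_iff_adj, hdist s hs]

theorem exists_isResolvingSet_ncard_eq_metricDim (hG : G.Preconnected) :
    ∃ S : Set V, IsResolvingSet G S ∧ S.ncard = metricDim G := by
  have huniv : IsResolvingSet G Set.univ :=
    isResolvingSet_of_adj_iff_imp_eq hG fun u hu => absurd (Set.mem_univ u) hu
  exact Nat.sInf_mem (s := {n | ∃ S : Set V, IsResolvingSet G S ∧ S.ncard = n})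
    ⟨_, Set.univ, huniv, rfl⟩

theorem dist_eq_of_adj_of_even_iff {u v x : V} (huv : G.Adj u v)
    (hparity : Even (G.dist u x) ↔ Even (G.dist v x)) : G.dist u x = G.dist v x := by
  have hdiff := huv.diff_dist_adj (u := x)
  rw [G.dist_comm (u := x), G.dist_comm (u := x)] at hdiff
  grind

theorem IsResolvingSet.ncard_le_two_pow_of_isClique (hS : IsResolvingSet G S) (hfin : S.Finite)
    {K : Set V} (hK : G.IsClique K) : K.ncard ≤ 2 ^ S.ncard := by
  have : Finite S := hfin
  let parity : K → S → Prop := fun u s => Even (G.dist (u : V) s)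
  have hinj : parity.Injective := by
    intro u v huv
    by_contra hne
    have hne' : (u : V) ≠ v := Subtype.coe_ne_coe.2 hne
    obtain ⟨s, hs, hdist⟩ := hS u v hne'
    exact hdist (dist_eq_of_adj_of_even_iff (hK u.2 v.2 hne') (congrFun huv ⟨s, hs⟩).to_iff)
  simpa [Nat.card_fun, Nat.card_coe_set_eq] using Nat.card_le_card_of_injective parity hinj

end ResolvingSet

section LineGraph

variable {G : SimpleGraph V}

theorem lineGraph_reachable_of_mem_of_mem {v : V} {e f : G.edgeSet} (he : v ∈ (e : Sym2 V))
    (hf : v ∈ (f : Sym2 V)) : G.lineGraph.Reachable e f := by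
  obtain rfl | hef := eq_or_ne e f
  · exact .rfl
  · exact (lineGraph_adj_iff_exists.2 ⟨hef, v, he, hf⟩).reachable

theorem lineGraph_reachable_of_walk {u v : V} (p : G.Walk u v) {e f : G.edgeSet}
    (he : u ∈ (e : Sym2 V)) (hf : v ∈ (f : Sym2 V)) : G.lineGraph.Reachable e f := by
  induction p generalizing e with
  | nil => exact lineGraph_reachable_of_mem_of_mem he hf
  | @cons u w _ huw _ ih =>
    let g : G.edgeSet := ⟨s(u, w), huw⟩
    exact (lineGraph_reachable_of_mem_of_mem (f := g) he (Sym2.mem_mk_left u w)).trans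
      (ih (Sym2.mem_mk_right u w) hf)

theorem preconnected_lineGraph (hG : G.Preconnected) : G.lineGraph.Preconnected := by
  intro e f
  obtain ⟨p⟩ := hG (Quot.out (e : Sym2 V)).1 (Quot.out (f : Sym2 V)).1
  exact lineGraph_reachable_of_walk p (Sym2.out_fst_mem _) (Sym2.out_fst_mem _)

theorem lineGraph_adj_mk_iff {e : G.edgeSet} {p q : V} (hpq : G.Adj p q)
    (hne : (e : Sym2 V) ≠ s(p, q)) :
    G.lineGraph.Adj e ⟨s(p, q), hpq⟩ ↔ p ∈ (e : Sym2 V) ∨ q ∈ (e : Sym2 V) := by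
  have hne' : e ≠ ⟨s(p, q), hpq⟩ := fun h => hne (congrArg Subtype.val h)
  rw [lineGraph_adj_iff_exists]
  simp [hne', and_or_left, exists_or]

theorem isClique_lineGraph_incidence (G : SimpleGraph V) (v : V) :
    G.lineGraph.IsClique {e | v ∈ (e : Sym2 V)} :=
  fun _ he _ hf hne => lineGraph_adj_iff_exists.2 ⟨hne, v, he, hf⟩

theorem ncard_incidence_eq_deg (G : SimpleGraph V) (v : V) :
    {e : G.edgeSet | v ∈ (e : Sym2 V)}.ncard = deg G v := by
  classical
  have himage : Subtype.val '' {e : G.edgeSet | v ∈ (e : Sym2 V)} = G.incidenceSet v := by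
    ext e
    simp [incidenceSet, and_comm]
  rw [← Set.ncard_image_of_injective _ Subtype.val_injective, himage, deg,
    ← Nat.card_coe_set_eq, ← Nat.card_coe_set_eq]
  exact Nat.card_congr (G.incidenceSetEquivNeighborSet v)

theorem IsResolvingSet.deg_le_two_pow_ncard {S : Set G.edgeSet} (hS : IsResolvingSet G.lineGraph S)
    (hfin : S.Finite) (v : V) : deg G v ≤ 2 ^ S.ncard := by
  rw [← ncard_incidence_eq_deg]
  exact hS.ncard_le_two_pow_of_isClique hfin (isClique_lineGraph_incidence G v)

theorem clog_maxDeg_le_metricDim_lineGraph [Finite V] (hG : G.Preconnected) :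
    Nat.clog 2 (maxDeg G) ≤ metricDim G.lineGraph := by
  obtain ⟨S, hS, hcard⟩ := exists_isResolvingSet_ncard_eq_metricDim (preconnected_lineGraph hG)
  rw [← hcard]
  refine Nat.clog_le_of_le_pow (csSup_le' ?_)
  rintro _ ⟨v, rfl⟩
  exact hS.deg_le_two_pow_ncard S.toFinite v

end LineGraph

section EdgePairs

variable {H : SimpleGraph V} {e f : Sym2 V} {x : V}

theorem mem_of_reachable_of_mem {A : Set V} (hA : ∀ p q, H.Adj p q → p ∈ A → q ∈ A) {a b : V}
    (hab : H.Reachable a b) (ha : a ∈ A) : b ∈ A := by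
  obtain ⟨p⟩ := hab
  by_contra hb
  obtain ⟨d, -, hfst, hsnd⟩ := p.exists_boundary_dart A ha hb
  exact hsnd (hA _ _ d.adj hfst)

theorem mem_symmDiff_of_adj (he : e ∉ H.edgeSet) (hf : f ∉ H.edgeSet)
    (hmeet : ∀ p q, H.Adj p q → (p ∈ e ∨ q ∈ e ↔ p ∈ f ∨ q ∈ f)) {p q : V} (hpq : H.Adj p q)
    (hp : p ∈ symmDiff (e : Set V) f) : q ∈ symmDiff (e : Set V) f := by
  have hnot : ∀ g ∉ H.edgeSet, ¬(p ∈ g ∧ q ∈ g) := fun g hg hmem =>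
    hg ((Sym2.mem_and_mem_iff hpq.ne).1 hmem ▸ hpq)
  have hnot_e := hnot e he
  have hnot_f := hnot f hf
  have hmeet_pq := hmeet p q hpq
  simp only [Set.mem_symmDiff, SetLike.mem_coe] at hp ⊢
  tauto

theorem exists_mem_notMem_of_ne (he : ¬e.IsDiag) (hef : e ≠ f) : ∃ v ∈ e, v ∉ f := by
  induction e with | _ a b =>
  by_contra! hsub
  exact hef ((Sym2.mem_and_mem_iff he).1
    ⟨hsub a (Sym2.mem_mk_left a b), hsub b (Sym2.mem_mk_right a b)⟩).symm

theorem exists_ne_mem_symmDiff (he : ¬e.IsDiag) (hf : ¬f.IsDiag) (hef : e ≠ f) (x : V) :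
    ∃ v ≠ x, v ∈ symmDiff (e : Set V) f := by
  obtain ⟨a, hae, haf⟩ := exists_mem_notMem_of_ne he hef
  obtain ⟨b, hbf, hbe⟩ := exists_mem_notMem_of_ne hf hef.symm
  obtain rfl | hax := eq_or_ne a x
  · exact ⟨b, (ne_of_mem_of_not_mem hae hbe).symm, .inr ⟨hbf, hbe⟩⟩
  · exact ⟨a, hax, .inl ⟨hae, haf⟩⟩

theorem notMem_of_forall_ne_mem_or_mem [Fintype V] (hcard : 5 ≤ Fintype.card V)
    (hcover : ∀ v ≠ x, v ∈ e ∨ v ∈ f) : x ∉ e ∧ x ∉ f := by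
  classical
  have hsub : ({x}ᶜ : Finset V) ⊆ e.toFinset ∪ f.toFinset := fun v hv => by
    simpa using hcover v (by simpa using hv)
  have hle_two (g : Sym2 V) : g.toFinset.card ≤ 2 := by
    rw [Sym2.card_toFinset]
    split <;> decide
  have hcompl : ({x}ᶜ : Finset V).card = Fintype.card V - 1 := by
    rw [Finset.card_compl, Finset.card_singleton]
  have hunion : (e.toFinset ∪ f.toFinset).card ≤ ({x}ᶜ : Finset V).card := by
    grind [Finset.card_union_le]
  have heq := Finset.eq_of_subset_of_card_le hsub hunion
  have hx : x ∉ e.toFinset ∪ f.toFinset := by simp [← heq]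
  simpa using hx

end EdgePairs

section SpanningWithStar

variable {G H : SimpleGraph V} {s : Set V} {c : V}

/-- `H` is a subgraph of `G` which joins any two vertices of `s` and keeps every edge of `G` from
the vertex `c ∈ s` to `s`, like a breadth-first search tree of `G[s]` rooted at `c`. It is a graph
on all of `V`, and paths of `H` between vertices of `s` may leave `s`. -/
structure IsSpanningWithStar (G H : SimpleGraph V) (s : Set V) (c : V) : Prop where
  le : H ≤ G
  mem : c ∈ s
  reachable : ∀ a ∈ s, ∀ b ∈ s, H.Reachable a b
  adj : ∀ v ∈ s, G.Adj c v → H.Adj c v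

theorem exists_isTree_le_forall_adj (hG : G.Connected) (c : V) :
    ∃ T ≤ G, T.IsTree ∧ ∀ v, G.Adj c v → T.Adj c v := by
  obtain ⟨T, hstar, hle, hT⟩ := hG.exists_isTree_le_of_le_of_isAcyclic
    (inf_le_left (b := starGraph c)) ((isAcyclic_starGraph c).anti inf_le_right)
  exact ⟨T, hle, hT, fun v hv => hstar ⟨hv, starGraph_center_adj hv.ne⟩⟩

theorem exists_isSpanningWithStar [Finite s] (hs : (G.induce s).Connected) (hc : c ∈ s) :
    ∃ H, IsSpanningWithStar G H s c ∧ H.edgeSet.ncard + 1 = s.ncard := by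
  obtain ⟨T, hle, hT, hstar⟩ := exists_isTree_le_forall_adj hs ⟨c, hc⟩
  let ι : s ↪ V := .subtype _
  refine ⟨T.map ι, ⟨?_, hc, fun a ha b hb => ?_, fun v hv hcv => ?_⟩, ?_⟩
  · exact map_le_iff_le_comap ι T G |>.2 hle
  · exact (hT.connected ⟨a, ha⟩ ⟨b, hb⟩).map (Embedding.map ι T).toHom
  · exact (map_adj_apply (f := ι)).2 (hstar ⟨v, hv⟩ hcv)
  · rw [edgeSet_map, Set.ncard_image_of_injective _ ι.sym2Map.injective, ← Nat.card_coe_set_eq,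
      ← Nat.card_coe_set_eq]
    exact (isTree_iff_connected_and_card.1 hT).2

namespace IsSpanningWithStar

theorem mem_edgeSet (hH : IsSpanningWithStar G H s c) {e : Sym2 V} (he : e ∈ G.edgeSet)
    (hc : c ∈ e) (hs : ∀ v ∈ e, v ∈ s) : e ∈ H.edgeSet := by
  obtain ⟨v, rfl⟩ := hc
  exact hH.adj v (hs v (Sym2.mem_mk_right c v)) he

theorem isResolvingSet_lineGraph [Fintype V] (hcard : 5 ≤ Fintype.card V) (hG : G.Preconnected)
    {x : V} (hH : IsSpanningWithStar G H {x}ᶜ c) :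
    IsResolvingSet G.lineGraph (Subtype.val ⁻¹' H.edgeSet) := by
  refine isResolvingSet_of_adj_iff_imp_eq (preconnected_lineGraph hG) fun e he f hf hadj => ?_
  by_contra hef
  have hmeet : ∀ p q, H.Adj p q →
      (p ∈ (e : Sym2 V) ∨ q ∈ (e : Sym2 V) ↔ p ∈ (f : Sym2 V) ∨ q ∈ (f : Sym2 V)) := by
    intro p q hpq
    have hne (g : G.edgeSet) (hg : (g : Sym2 V) ∉ H.edgeSet) : (g : Sym2 V) ≠ s(p, q) :=
      (ne_of_mem_of_not_mem hpq hg).symm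
    rw [← lineGraph_adj_mk_iff (hH.le hpq) (hne e he),
      ← lineGraph_adj_mk_iff (hH.le hpq) (hne f hf)]
    exact hadj _ hpq
  obtain ⟨a, hax, ha⟩ := exists_ne_mem_symmDiff (G.not_isDiag_of_mem_edgeSet e.2)
    (G.not_isDiag_of_mem_edgeSet f.2) (Subtype.coe_ne_coe.2 hef) x
  have hcover : ∀ v ≠ x, v ∈ (e : Sym2 V) ∨ v ∈ (f : Sym2 V) := fun v hvx =>
    (mem_of_reachable_of_mem (fun _ _ => mem_symmDiff_of_adj he hf hmeet)
      (hH.reachable a hax v hvx) ha).imp And.left And.left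
  obtain ⟨hxe, hxf⟩ := notMem_of_forall_ne_mem_or_mem hcard hcover
  rcases hcover c hH.mem with hce | hcf
  · exact he (hH.mem_edgeSet e.2 hce fun _ hv => ne_of_mem_of_not_mem hv hxe)
  · exact hf (hH.mem_edgeSet f.2 hcf fun _ hv => ne_of_mem_of_not_mem hv hxf)

end IsSpanningWithStar

theorem metricDim_lineGraph_le [Fintype V] (hG : G.Connected) (hcard : 5 ≤ Fintype.card V) :
    metricDim G.lineGraph ≤ Fintype.card V - 2 := by
  have : Nontrivial V := Fintype.one_lt_card_iff_nontrivial.1 (by lia)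
  obtain ⟨x, hx⟩ := hG.exists_connected_induce_compl_singleton_of_finite_nontrivial
  obtain ⟨c, hcx⟩ := exists_ne x
  obtain ⟨H, hH, hedges⟩ := exists_isSpanningWithStar hx hcx
  have hcompl : ({x}ᶜ : Set V).ncard = Fintype.card V - 1 := by
    rw [Set.ncard_compl, Set.ncard_singleton, Nat.card_eq_fintype_card]
  calc metricDim G.lineGraph
    _ ≤ (Subtype.val ⁻¹' H.edgeSet : Set G.edgeSet).ncard :=
        (hH.isResolvingSet_lineGraph hcard hG.preconnected).metricDim_le
    _ = H.edgeSet.ncard := Set.ncard_preimage_of_injective_subset_range Subtype.val_injective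
        (by simpa using hH.le)
    _ = Fintype.card V - 2 := by lia

end SpanningWithStar

/-- For a finite connected simple graph `G` with at least five vertices,
`⌈log₂ Δ(G)⌉ ≤ μ(L(G)) ≤ |V(G)| - 2`. -/
theorem metricDim_lineGraph_bounds {V : Type*} [Fintype V] (G : SimpleGraph V)
    (hconn : G.Connected) (hcard : 5 ≤ Fintype.card V) :
    Nat.clog 2 (maxDeg G) ≤ metricDim G.lineGraph ∧
      metricDim G.lineGraph ≤ Fintype.card V - 2 := by
  exact ⟨clog_maxDeg_le_metricDim_lineGraph hconn.preconnected, metricDim_lineGraph_le hconn hcard⟩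
end
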